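/- Fix real α, β > −1, j ∈ ℕ, γ ∈ ℝ, M > 0, and a sequence M_n ≥ 0 with lim_{n→∞} M_n n^γ = M. If γ > 2(α+2j+1), then lim_{n→∞} Q_n(1 − z²/(2n²))/n^α = g_α(z), uniformly on compact subsets of ℂ (Q_n is a polynomial with real coefficients, evaluated at the complex argument 1 − z²/(2n²)). -/

import Mathlib

open Polynomial Filter

/-- The Jacobi polynomial `P_n^{(α,β)}` as a real polynomial. -/
noncomputable def jacobiP (α β : ℝ) (n : ℕ) : Polynomial ℝ :=
  ∑ k ∈ Finset.range (n + 1),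
    Polynomial.C (Real.Gamma (n + α + 1) / (Real.Gamma ((n : ℝ) - k + 1) * Real.Gamma (α + k + 1)) *
        (Real.Gamma (n + β + 1) / (Real.Gamma ((k : ℝ) + 1) * Real.Gamma ((n : ℝ) - k + β + 1)))) *
      (Polynomial.C (2⁻¹ : ℝ) * (Polynomial.X - 1)) ^ k *
      (Polynomial.C (2⁻¹ : ℝ) * (Polynomial.X + 1)) ^ (n - k)

/-- The squared Jacobi norm `‖P_n^{(α,β)}‖²`. -/
noncomputable def jacobiNormSq (α β : ℝ) (n : ℕ) : ℝ :=
  ∫ x in (-1 : ℝ)..1, (jacobiP α β n).eval x ^ 2 * (1 - x) ^ α * (1 + x) ^ β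

/-- The kernel `K_n^{(j,k)}(x,y)`. -/
noncomputable def kernK (α β : ℝ) (j k n : ℕ) (x y : ℝ) : ℝ :=
  ∑ i ∈ Finset.range (n + 1),
    (Polynomial.derivative^[j] (jacobiP α β i)).eval x *
      (Polynomial.derivative^[k] (jacobiP α β i)).eval y / jacobiNormSq α β i

/-- The kernel `K_n^{(j,0)}(1,·)` as a polynomial. -/
noncomputable def kernKPoly (α β : ℝ) (j n : ℕ) : Polynomial ℝ :=
  ∑ i ∈ Finset.range (n + 1),
    Polynomial.C ((Polynomial.derivative^[j] (jacobiP α β i)).eval 1 / jacobiNormSq α β i) *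
      jacobiP α β i

/-- The varying Sobolev inner product `(f,g)_{S,n}` with mass `m`. -/
noncomputable def sobInner (α β : ℝ) (j : ℕ) (m : ℝ) (f g : Polynomial ℝ) : ℝ :=
  (∫ x in (-1 : ℝ)..1, f.eval x * g.eval x * (1 - x) ^ α * (1 + x) ^ β) +
    m * (Polynomial.derivative^[j] f).eval 1 * (Polynomial.derivative^[j] g).eval 1

/-- The Jacobi–Sobolev orthogonal polynomial `Q_n`. -/
noncomputable def sobQ (α β : ℝ) (j : ℕ) (Ms : ℕ → ℝ) (n : ℕ) : Polynomial ℝ :=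
  jacobiP α β n -
    Polynomial.C (Ms n * (Polynomial.derivative^[j] (jacobiP α β n)).eval 1 /
        (1 + Ms n * kernK α β j j (n - 1) 1 1)) *
      kernKPoly α β j (n - 1)

/-- The entire function `g_ν(z) = ∑ (-1)^k (z/2)^{2k}/(k! Γ(k+ν+1))`, so that
`J_ν(x) = (x/2)^ν g_ν(x)`. -/
noncomputable def besselG (ν : ℝ) (z : ℂ) : ℂ :=
  ∑' k : ℕ, (-1) ^ k / ((Nat.factorial k : ℂ) * Complex.Gamma ((k : ℂ) + (ν : ℂ) + 1)) *
    (z / 2) ^ (2 * k)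


/-- Normalised Gamma ratio. -/
noncomputable def gr (s : ℝ) (n : ℕ) : ℝ := Real.Gamma (n + s + 1) / (n.factorial * (n : ℝ) ^ s)

lemma gr_step (s : ℝ) (h : Tendsto (gr (s + 1)) atTop (nhds 1)) : Tendsto (gr s) atTop (nhds 1) := by
  have h1 : Tendsto (fun n : ℕ => (n : ℝ) / (n + (s + 1))) atTop (nhds 1) :=
    tendsto_natCast_div_add_atTop (s + 1)
  have h2 := h.mul h1
  rw [one_mul] at h2
  refine h2.congr' ?_
  obtain ⟨N, hN⟩ := exists_nat_gt (|s| + 1)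
  filter_upwards [eventually_ge_atTop (N + 1)] with n hn
  have hn' : (N : ℝ) + 1 ≤ n := by exact_mod_cast hn
  have hs := abs_le.1 (le_refl |s|)
  have hpos : (0 : ℝ) < n := by linarith [abs_nonneg s]
  have hp2 : (0 : ℝ) < n + (s + 1) := by linarith
  unfold gr
  rw [show (n : ℝ) + (s + 1) + 1 = (n + s + 1) + 1 by ring, Real.Gamma_add_one (by linarith),
    Real.rpow_add hpos, Real.rpow_one]
  have := Real.rpow_pos_of_pos hpos s
  have : (n.factorial : ℝ) ≠ 0 := by positivity
  rw [show (n : ℝ) + s + 1 = n + (s + 1) by ring]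
  field_simp

lemma gr_pos_tendsto (s : ℝ) (hs : 0 < s) : Tendsto (gr s) atTop (nhds 1) := by
  have h := Real.GammaSeq_tendsto_Gamma s
  have hG := Real.Gamma_pos_of_pos hs
  have h2 := (tendsto_const_nhds (x := Real.Gamma s)).div h hG.ne'
  rw [div_self hG.ne'] at h2
  refine h2.congr' ?_
  filter_upwards [eventually_ge_atTop 1] with n hn
  have key : Real.Gamma (n + s + 1) = Real.Gamma s * ∏ j ∈ Finset.range (n + 1), (s + j) := by
    clear hn h h2
    induction n with
    | zero => simp [Real.Gamma_add_one hs.ne', mul_comm]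
    | succ n ih =>
      rw [Finset.prod_range_succ, ← mul_assoc, ← ih]
      push_cast
      rw [show (n : ℝ) + 1 + s + 1 = (n + s + 1) + 1 by ring, Real.Gamma_add_one (by positivity)]
      ring
  have hpr : ∏ j ∈ Finset.range (n + 1), (s + j) ≠ 0 := by
    apply Finset.prod_ne_zero_iff.2
    intro j _
    positivity
  have hn' : (0 : ℝ) < n := by exact_mod_cast hn
  have := Real.rpow_pos_of_pos hn' s
  simp only [gr, key, Real.GammaSeq, Pi.div_apply]
  field_simp

lemma gr_tendsto (s : ℝ) : Tendsto (gr s) atTop (nhds 1) := by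
  have : ∀ m : ℕ, ∀ s : ℝ, 0 < s + m → Tendsto (gr s) atTop (nhds 1) := by
    intro m
    induction m with
    | zero => intro s hs; exact gr_pos_tendsto s (by simpa using hs)
    | succ m ih =>
      intro s hs
      apply gr_step
      apply ih
      push_cast at hs
      linarith
  obtain ⟨N, hN⟩ := exists_nat_gt (|s| + 1)
  exact this N s (by linarith [neg_abs_le s])

/-- Upper bound for the Gamma ratio. -/
lemma gamma_ratio_bound (s : ℝ) :
    ∃ C : ℝ, 0 < C ∧ ∀ n : ℕ, Real.Gamma (n + s + 1) ≤ C * n.factorial * ((n : ℝ) + 1) ^ s := by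
  have h1 : Tendsto (fun n : ℕ => (n : ℝ) / (n + 1)) atTop (nhds 1) :=
    tendsto_natCast_div_add_atTop 1
  have h2 : Tendsto (fun n : ℕ => ((n : ℝ) / (n + 1)) ^ s) atTop (nhds 1) := by
    simpa using h1.rpow_const (p := s) (Or.inl one_ne_zero)
  have h3 := (gr_tendsto s).mul h2
  obtain ⟨C, hC⟩ := h3.bddAbove_range
  refine ⟨max C (max (Real.Gamma (s + 1)) 1), by positivity, fun n => ?_⟩
  have hf : (0 : ℝ) < n.factorial := by positivity
  have hr : (0 : ℝ) < ((n : ℝ) + 1) ^ s := by positivity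
  rcases Nat.eq_zero_or_pos n with rfl | hn
  · simp
  · have hn' : (0 : ℝ) < n := by exact_mod_cast hn
    have h4 : gr s n * ((n : ℝ) / (n + 1)) ^ s ≤ C := hC ⟨n, rfl⟩
    have hr' := Real.rpow_pos_of_pos hn' s
    rw [gr, Real.div_rpow hn'.le (by positivity)] at h4
    have h5 : Real.Gamma (n + s + 1) = (Real.Gamma (n + s + 1) / (n.factorial * (n : ℝ) ^ s) *
      ((n : ℝ) ^ s / ((n : ℝ) + 1) ^ s)) * n.factorial * ((n : ℝ) + 1) ^ s := by
      field_simp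
    rw [h5]
    gcongr
    exact h4.trans (le_max_left _ _)

/-- `Γ(x+1)/Γ(x-k+1)` bound. -/
lemma gamma_desc_bound (n : ℕ) (b : ℝ) (hb : -1 < b) (k : ℕ) (hk : k ≤ n) :
    Real.Gamma (n + b + 1) ≤ ((1 + |b|) * (n + 1)) ^ k * Real.Gamma ((n : ℝ) - k + b + 1) := by
  induction k with
  | zero => simp
  | succ k ih =>
    refine (ih (by omega)).trans ?_
    have hk' : ((k : ℝ) + 1) ≤ n := by exact_mod_cast hk
    rw [pow_succ, mul_assoc]
    push_cast
    rw [show (n : ℝ) - k + b + 1 = (n - (k + 1) + b + 1) + 1 by ring,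
      Real.Gamma_add_one (by linarith)]
    have hG : 0 < Real.Gamma ((n : ℝ) - (k + 1) + b + 1) := Real.Gamma_pos_of_pos (by linarith)
    have hb' := le_abs_self b
    have hk0 : (0 : ℝ) ≤ k := by positivity
    have hbn : 0 ≤ |b| * n := by positivity
    gcongr
    nlinarith

lemma gamma_lower (a : ℝ) (ha : -1 < a) : ∃ c : ℝ, 0 < c ∧ ∀ k : ℕ, c ≤ Real.Gamma (a + k + 1) := by
  have hpos : ∀ k : ℕ, 0 < Real.Gamma (a + k + 1) := fun k =>
    Real.Gamma_pos_of_pos (by linarith [(Nat.cast_nonneg k : (0:ℝ) ≤ k)])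
  refine ⟨min (Real.Gamma (a + 1)) (min (Real.Gamma (a + 2)) 1), ?_, fun k => ?_⟩
  · have h0 := hpos 0
    have h1 := hpos 1
    simp only [Nat.cast_zero, Nat.cast_one] at h0 h1
    rw [add_zero] at h0
    rw [show a + 1 + 1 = a + 2 by ring] at h1
    positivity
  · match k with
    | 0 => simp
    | 1 => simp [show a + 1 + 1 = a + 2 by ring]
    | (k + 2) =>
      refine (min_le_right _ _).trans ((min_le_right _ _).trans ?_)
      refine Real.Gamma_two.symm.le.trans ?_
      apply Real.Gamma_strictMonoOn_Ici.monotoneOn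
      · simp
      · simp; linarith [(Nat.cast_nonneg k : (0:ℝ) ≤ k)]
      · push_cast; linarith [(Nat.cast_nonneg k : (0:ℝ) ≤ k)]

/-- Coefficients in the definition of the Jacobi polynomial. -/
noncomputable def cc (α β : ℝ) (n k : ℕ) : ℝ :=
  Real.Gamma (n + α + 1) / (Real.Gamma ((n : ℝ) - k + 1) * Real.Gamma (α + k + 1)) *
        (Real.Gamma (n + β + 1) / (Real.Gamma ((k : ℝ) + 1) * Real.Gamma ((n : ℝ) - k + β + 1)))

lemma jacobiP_eq (α β : ℝ) (n : ℕ) : jacobiP α β n = ∑ k ∈ Finset.range (n + 1),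
    Polynomial.C (cc α β n k) *
      (Polynomial.C (2⁻¹ : ℝ) * (Polynomial.X - 1)) ^ k *
      (Polynomial.C (2⁻¹ : ℝ) * (Polynomial.X + 1)) ^ (n - k) := rfl

lemma cc_pos (α β : ℝ) (hα : -1 < α) (hβ : -1 < β) (n k : ℕ) (hk : k ≤ n) : 0 < cc α β n k := by
  have hk' : (k : ℝ) ≤ n := by exact_mod_cast hk
  have hk0 : (0 : ℝ) ≤ k := by positivity
  have h1 : 0 < Real.Gamma (n + α + 1) := Real.Gamma_pos_of_pos (by linarith)
  have h2 : 0 < Real.Gamma ((n : ℝ) - k + 1) := Real.Gamma_pos_of_pos (by linarith)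
  have h3 : 0 < Real.Gamma (α + k + 1) := Real.Gamma_pos_of_pos (by linarith)
  have h4 : 0 < Real.Gamma (n + β + 1) := Real.Gamma_pos_of_pos (by linarith)
  have h5 : 0 < Real.Gamma ((k : ℝ) + 1) := Real.Gamma_pos_of_pos (by linarith)
  have h6 : 0 < Real.Gamma ((n : ℝ) - k + β + 1) := Real.Gamma_pos_of_pos (by linarith)
  unfold cc
  positivity

lemma cc_bound (α β : ℝ) (hα : -1 < α) (hβ : -1 < β) :
    ∃ A : ℝ, 0 < A ∧ ∀ n k : ℕ, k ≤ n → cc α β n k ≤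
      A * ((n : ℝ) + 1) ^ α * ((1 + |β|) * ((n : ℝ) + 1) ^ 2) ^ k / k.factorial := by
  obtain ⟨C, hC, hCb⟩ := gamma_ratio_bound α
  obtain ⟨c, hc, hcb⟩ := gamma_lower α hα
  refine ⟨C / c, by positivity, fun n k hk => ?_⟩
  have hk' : (k : ℝ) ≤ n := by exact_mod_cast hk
  have hk0 : (0 : ℝ) ≤ k := by positivity
  have h2 : 0 < Real.Gamma ((n : ℝ) - k + 1) := Real.Gamma_pos_of_pos (by linarith)
  have h3 : 0 < Real.Gamma (α + k + 1) := Real.Gamma_pos_of_pos (by linarith)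
  have h6 : 0 < Real.Gamma ((n : ℝ) - k + β + 1) := Real.Gamma_pos_of_pos (by linarith)
  have h7 := gamma_desc_bound n β hβ k hk
  have h8 := gamma_desc_bound n 0 (by norm_num) k hk
  simp only [add_zero, abs_zero, one_mul] at h8
  rw [Real.Gamma_nat_eq_factorial] at h8
  have e1 : Real.Gamma (n + α + 1) / (Real.Gamma ((n : ℝ) - k + 1) * Real.Gamma (α + k + 1)) ≤
      C / c * ((n : ℝ) + 1) ^ α * ((n : ℝ) + 1) ^ k := by
    rw [div_le_iff₀ (by positivity)]
    have hr : (0 : ℝ) < ((n : ℝ) + 1) ^ α := by positivity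
    calc Real.Gamma (n + α + 1) ≤ C * n.factorial * ((n : ℝ) + 1) ^ α := hCb n
      _ ≤ C * (((n : ℝ) + 1) ^ k * Real.Gamma ((n : ℝ) - k + 1)) * ((n : ℝ) + 1) ^ α := by gcongr
      _ = C / c * ((n : ℝ) + 1) ^ α * ((n : ℝ) + 1) ^ k * (Real.Gamma ((n : ℝ) - k + 1) * c) := by
        field_simp
      _ ≤ _ := by
        have := hcb k
        gcongr
  have e2 : Real.Gamma (n + β + 1) / (Real.Gamma ((k : ℝ) + 1) * Real.Gamma ((n : ℝ) - k + β + 1))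
      ≤ ((1 + |β|) * (n + 1)) ^ k / k.factorial := by
    rw [Real.Gamma_nat_eq_factorial, div_le_div_iff₀ (by positivity) (by positivity)]
    have hf : (0 : ℝ) < k.factorial := by positivity
    calc _ ≤ (((1 + |β|) * (n + 1)) ^ k * Real.Gamma ((n : ℝ) - k + β + 1)) * k.factorial := by
          gcongr
      _ = _ := by ring
  have e3 : 0 ≤ Real.Gamma (n + β + 1) / (Real.Gamma ((k : ℝ) + 1) * Real.Gamma ((n : ℝ) - k + β + 1)) := by
    have h4 : 0 < Real.Gamma (n + β + 1) := Real.Gamma_pos_of_pos (by linarith)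
    have h5 : 0 < Real.Gamma ((k : ℝ) + 1) := Real.Gamma_pos_of_pos (by linarith)
    positivity
  unfold cc
  refine (mul_le_mul e1 e2 e3 (by positivity)).trans (le_of_eq ?_)
  rw [mul_pow, mul_pow, ← pow_mul, mul_comm 2 k, pow_mul]
  ring

/-- The `k`-th term of the Jacobi polynomial at `1 - 2w`. -/
noncomputable def jterm (α β : ℝ) (n k : ℕ) (w : ℂ) : ℂ :=
  (cc α β n k : ℂ) * (-w) ^ k * (1 - w) ^ (n - k)

lemma aeval_jacobi (α β : ℝ) (n : ℕ) (w : ℂ) :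
    Polynomial.aeval (1 - 2 * w) (jacobiP α β n) = ∑ k ∈ Finset.range (n + 1), jterm α β n k w := by
  rw [jacobiP_eq, map_sum]
  refine Finset.sum_congr rfl fun k _ => ?_
  simp only [map_mul, map_pow, map_sub, map_add, Polynomial.aeval_C, Polynomial.aeval_X, map_one,
    Complex.coe_algebraMap, jterm]
  congr 2
  · congr 1; push_cast; ring
  · push_cast; ring

lemma jterm_bound (α β : ℝ) (hα : -1 < α) (hβ : -1 < β) (R : ℝ) (hR : 0 ≤ R) :
    ∃ A : ℝ, 0 < A ∧ ∀ n k : ℕ, k ≤ n → ∀ w : ℂ, ‖w‖ ≤ R / ((n : ℝ) + 1) ^ 2 →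
      ‖jterm α β n k w‖ ≤ A * ((n : ℝ) + 1) ^ α * (((1 + |β|) * R) ^ k / k.factorial) := by
  obtain ⟨A, hA, hAb⟩ := cc_bound α β hα hβ
  refine ⟨A * Real.exp R, by positivity, fun n k hk w hw => ?_⟩
  have h1 : ‖(1 - w) ^ (n - k)‖ ≤ Real.exp R := by
    rw [norm_pow]
    have h2 : ‖1 - w‖ ≤ Real.exp ‖w‖ := by
      calc ‖1 - w‖ ≤ ‖(1 : ℂ)‖ + ‖w‖ := norm_sub_le _ _
        _ = ‖w‖ + 1 := by rw [norm_one, add_comm]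
        _ ≤ _ := Real.add_one_le_exp _
    calc ‖1 - w‖ ^ (n - k) ≤ (Real.exp ‖w‖) ^ (n - k) := by gcongr
      _ = Real.exp ((n - k : ℕ) * ‖w‖) := by rw [← Real.exp_nat_mul]
      _ ≤ Real.exp R := by
        apply Real.exp_le_exp.2
        have h3 : ((n - k : ℕ) : ℝ) ≤ ((n : ℝ) + 1) ^ 2 := by
          have : ((n - k : ℕ) : ℝ) ≤ n := by exact_mod_cast Nat.sub_le n k
          nlinarith [(Nat.cast_nonneg n : (0:ℝ) ≤ n)]
        calc ((n - k : ℕ) : ℝ) * ‖w‖ ≤ ((n : ℝ) + 1) ^ 2 * (R / ((n : ℝ) + 1) ^ 2) := by gcongr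
          _ = R := by field_simp
  have h4 : ‖(-w) ^ k‖ ≤ (R / ((n : ℝ) + 1) ^ 2) ^ k := by
    rw [norm_pow, norm_neg]; gcongr
  have h5 : ‖(cc α β n k : ℂ)‖ ≤ A * ((n : ℝ) + 1) ^ α * ((1 + |β|) * ((n : ℝ) + 1) ^ 2) ^ k / k.factorial := by
    rw [Complex.norm_real, Real.norm_of_nonneg (cc_pos α β hα hβ n k hk).le]
    exact hAb n k hk
  unfold jterm
  rw [norm_mul, norm_mul]
  calc _ ≤ A * ((n : ℝ) + 1) ^ α * ((1 + |β|) * ((n : ℝ) + 1) ^ 2) ^ k / k.factorial *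
        (R / ((n : ℝ) + 1) ^ 2) ^ k * Real.exp R := by gcongr
    _ = _ := by
      rw [mul_pow, mul_pow, div_pow]
      field_simp

lemma jacobi_bound (α β : ℝ) (hα : -1 < α) (hβ : -1 < β) (R : ℝ) (hR : 0 ≤ R) :
    ∃ A : ℝ, 0 < A ∧ ∀ n : ℕ, ∀ w : ℂ, ‖w‖ ≤ R / ((n : ℝ) + 1) ^ 2 →
      ‖Polynomial.aeval (1 - 2 * w) (jacobiP α β n)‖ ≤ A * ((n : ℝ) + 1) ^ α := by
  obtain ⟨A, hA, hAb⟩ := jterm_bound α β hα hβ R hR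
  refine ⟨A * Real.exp ((1 + |β|) * R), by positivity, fun n w hw => ?_⟩
  rw [aeval_jacobi]
  calc _ ≤ ∑ k ∈ Finset.range (n + 1), ‖jterm α β n k w‖ := norm_sum_le _ _
    _ ≤ ∑ k ∈ Finset.range (n + 1), A * ((n : ℝ) + 1) ^ α * (((1 + |β|) * R) ^ k / k.factorial) := by
      refine Finset.sum_le_sum fun k hk => hAb n k ?_ w hw
      have := Finset.mem_range.1 hk; omega
    _ = A * ((n : ℝ) + 1) ^ α * ∑ k ∈ Finset.range (n + 1), (((1 + |β|) * R) ^ k / k.factorial) := by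
      rw [Finset.mul_sum]
    _ ≤ A * ((n : ℝ) + 1) ^ α * Real.exp ((1 + |β|) * R) := by
      gcongr
      exact Real.sum_le_exp_of_nonneg (by positivity) _
    _ = _ := by ring

lemma jacobi_taylor_nonneg (α β : ℝ) (hα : -1 < α) (hβ : -1 < β) (n j : ℕ) :
    0 ≤ (Polynomial.taylor 1 (jacobiP α β n)).coeff j := by
  have hmul : ∀ p q : Polynomial ℝ, (∀ i, 0 ≤ p.coeff i) → (∀ i, 0 ≤ q.coeff i) →
      ∀ i, 0 ≤ (p * q).coeff i := by
    intro p q hp hq i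
    rw [Polynomial.coeff_mul]
    exact Finset.sum_nonneg fun x _ => mul_nonneg (hp _) (hq _)
  have hpow : ∀ p : Polynomial ℝ, (∀ i, 0 ≤ p.coeff i) → ∀ m i, 0 ≤ (p ^ m).coeff i := by
    intro p hp m
    induction m with
    | zero =>
      intro i
      rw [pow_zero, Polynomial.coeff_one]
      split_ifs <;> norm_num
    | succ m ih =>
      rw [pow_succ]
      exact hmul _ _ ih hp
  have hC : ∀ c : ℝ, 0 ≤ c → ∀ i, 0 ≤ (Polynomial.C c).coeff i := by
    intro c hc i
    rw [Polynomial.coeff_C]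
    split_ifs
    · exact hc
    · exact le_rfl
  have hX : ∀ i, 0 ≤ (Polynomial.X : Polynomial ℝ).coeff i := by
    intro i
    rw [Polynomial.coeff_X]
    split_ifs <;> norm_num
  rw [jacobiP_eq, map_sum, Polynomial.finsetSum_coeff]
  refine Finset.sum_nonneg fun k hk => ?_
  have hk' : k ≤ n := by have := Finset.mem_range.1 hk; omega
  have e : Polynomial.taylor 1 (Polynomial.C (cc α β n k) *
      (Polynomial.C (2⁻¹ : ℝ) * (Polynomial.X - 1)) ^ k *
      (Polynomial.C (2⁻¹ : ℝ) * (Polynomial.X + 1)) ^ (n - k)) =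
      Polynomial.C (cc α β n k) * (Polynomial.C (2⁻¹ : ℝ) * Polynomial.X) ^ k *
      (Polynomial.C (2⁻¹ : ℝ) * (Polynomial.X + Polynomial.C 2)) ^ (n - k) := by
    simp only [Polynomial.taylor_apply, Polynomial.mul_comp, Polynomial.pow_comp,
      Polynomial.C_comp, Polynomial.sub_comp, Polynomial.add_comp, Polynomial.X_comp,
      Polynomial.one_comp]
    congr 3
    · simp
    · rw [add_assoc, ← Polynomial.C_1, ← Polynomial.C_add]; norm_num
  rw [e]
  refine hmul _ _ (hmul _ _ (hC _ (cc_pos α β hα hβ n k hk').le) ?_) ?_ j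
  · exact hpow _ (hmul _ _ (hC _ (by norm_num)) hX) k
  · refine hpow _ (hmul _ _ (hC _ (by norm_num)) ?_) _
    intro i
    rw [Polynomial.coeff_add]
    exact add_nonneg (hX i) (hC 2 (by norm_num) i)

lemma deriv_bound (α β : ℝ) (hα : -1 < α) (hβ : -1 < β) (j : ℕ) :
    ∃ A : ℝ, 0 < A ∧ ∀ n : ℕ,
      |(Polynomial.derivative^[j] (jacobiP α β n)).eval 1| ≤ A * ((n : ℝ) + 1) ^ (α + 2 * j) := by
  obtain ⟨A, hA, hAb⟩ := jacobi_bound α β hα hβ 1 zero_le_one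
  refine ⟨j.factorial * A, by positivity, fun n => ?_⟩
  have hn : (0 : ℝ) < (n : ℝ) + 1 := by positivity
  set u : ℝ := 1 / ((n : ℝ) + 1) ^ 2 with hu
  have hu0 : 0 < u := by positivity
  set p := Polynomial.taylor 1 (jacobiP α β n) with hp
  have hnn := jacobi_taylor_nonneg α β hα hβ n
  have h1 : (Polynomial.derivative^[j] (jacobiP α β n)).eval 1 = j.factorial * p.coeff j := by
    rw [hp, Polynomial.taylor_coeff, ← Polynomial.factorial_smul_hasseDeriv]
    simp
  have h2 : p.coeff j * u ^ j ≤ p.eval u := by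
    by_cases hj : j ≤ p.natDegree
    · rw [Polynomial.eval_eq_sum_range]
      refine Finset.single_le_sum (f := fun i => p.coeff i * u ^ i)
        (fun i _ => mul_nonneg (hnn i) (by positivity)) (Finset.mem_range.2 (by omega))
    · rw [Polynomial.coeff_eq_zero_of_natDegree_lt (by omega), zero_mul,
        Polynomial.eval_eq_sum_range]
      exact Finset.sum_nonneg (fun i _ => mul_nonneg (hnn i) (by positivity))
  have h3 : p.eval u ≤ A * ((n : ℝ) + 1) ^ α := by
    have h4 := hAb n (-((u / 2 : ℝ) : ℂ)) (by
      rw [norm_neg, Complex.norm_real, Real.norm_of_nonneg (by positivity)]; linarith)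
    have h5 : (1 - 2 * (-((u / 2 : ℝ) : ℂ))) = ((u + 1 : ℝ) : ℂ) := by push_cast; ring
    rw [h5, ← Complex.coe_algebraMap, Polynomial.aeval_algebraMap_apply, Complex.coe_algebraMap,
      Complex.norm_real] at h4
    rw [hp, Polynomial.taylor_eval]
    refine (le_abs_self _).trans ?_
    simpa using h4
  have h6 : p.coeff j ≤ A * ((n : ℝ) + 1) ^ (α + 2 * j) := by
    have h7 := h2.trans h3
    have h8 : u ^ j = 1 / ((n : ℝ) + 1) ^ (2 * j) := by rw [hu, div_pow, one_pow, ← pow_mul]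
    rw [h8, mul_one_div, div_le_iff₀ (by positivity)] at h7
    rw [Real.rpow_add hn, show (2 * (j : ℝ)) = ((2 * j : ℕ) : ℝ) by push_cast; ring,
      Real.rpow_natCast, ← mul_assoc]
    exact h7
  rw [h1, abs_of_nonneg (mul_nonneg (by positivity) (hnn j)), mul_assoc]
  gcongr

lemma cc_limit (α β : ℝ) (k : ℕ) :
    Tendsto (fun n : ℕ => cc α β n k / ((n : ℝ) ^ α * ((n : ℝ) ^ 2) ^ k)) atTop
      (nhds (1 / (k.factorial * Real.Gamma (α + k + 1)))) := by
  have h := (((gr_tendsto α).div (gr_tendsto (-k)) one_ne_zero).mul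
    ((gr_tendsto β).div (gr_tendsto (β - k)) one_ne_zero)).mul
    (tendsto_const_nhds (x := 1 / (k.factorial * Real.Gamma (α + k + 1))))
  simp only [div_one, one_mul] at h
  refine h.congr' ?_
  filter_upwards [eventually_ge_atTop 1] with n hn
  have hn' : (0 : ℝ) < n := by exact_mod_cast hn
  have hf : (n.factorial : ℝ) ≠ 0 := by positivity
  have ha := (Real.rpow_pos_of_pos hn' α).ne'
  have hb := (Real.rpow_pos_of_pos hn' β).ne'
  simp only [gr, Pi.div_apply, cc]
  rw [Real.rpow_sub hn', Real.rpow_neg hn'.le, Real.rpow_natCast, Real.Gamma_nat_eq_factorial,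
    show (n : ℝ) + -(k : ℝ) + 1 = n - k + 1 by ring,
    show (n : ℝ) + (β - k) + 1 = n - k + β + 1 by ring, ← pow_mul, mul_comm 2 k, pow_mul]
  field_simp

lemma norm_pow_sub_one (w : ℂ) (m : ℕ) : ‖(1 - w) ^ m - 1‖ ≤ Real.exp (m * ‖w‖) - 1 := by
  have h : ‖(1 - w) ^ m - 1‖ ≤ (1 + ‖w‖) ^ m - 1 := by
    induction m with
    | zero => simp
    | succ m ih =>
      have e : (1 - w) ^ (m + 1) - 1 = ((1 - w) ^ m - 1) * (1 - w) + -w := by ring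
      rw [e]
      have h1 : ‖1 - w‖ ≤ 1 + ‖w‖ := by simpa using norm_sub_le (1 : ℂ) w
      calc _ ≤ ‖((1 - w) ^ m - 1) * (1 - w)‖ + ‖-w‖ := norm_add_le _ _
        _ ≤ ((1 + ‖w‖) ^ m - 1) * (1 + ‖w‖) + ‖w‖ := by
          rw [norm_mul, norm_neg]
          gcongr
          exact (norm_nonneg _).trans ih
        _ = _ := by ring
  refine h.trans ?_
  have : (1 + ‖w‖) ^ m ≤ Real.exp (m * ‖w‖) := by
    rw [Real.exp_nat_mul]
    gcongr
    linarith [Real.add_one_le_exp ‖w‖]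
  linarith

/-- Terms of the series of `besselG`. -/
noncomputable def bterm (α : ℝ) (k : ℕ) (z : ℂ) : ℂ :=
  (-1) ^ k / ((Nat.factorial k : ℂ) * Complex.Gamma ((k : ℂ) + (α : ℂ) + 1)) * (z / 2) ^ (2 * k)

lemma bterm_eq (α : ℝ) (k : ℕ) (z : ℂ) :
    bterm α k z = ((1 / (k.factorial * Real.Gamma (α + k + 1)) : ℝ) : ℂ) * (-(z ^ 2 / 4)) ^ k := by
  unfold bterm
  rw [show (k : ℂ) + (α : ℂ) + 1 = ((α + k + 1 : ℝ) : ℂ) by push_cast; ring, Complex.Gamma_ofReal]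
  have : (-(z ^ 2 / 4)) ^ k = (-1) ^ k * (z / 2) ^ (2 * k) := by
    rw [pow_mul, ← mul_pow]
    congr 1
    ring
  rw [this]
  push_cast
  ring

lemma besselG_continuous (α : ℝ) (hα : -1 < α) : Continuous (besselG α) := by
  rw [continuous_iff_continuousAt]
  intro z0
  obtain ⟨c, hc, hcb⟩ := gamma_lower α hα
  have hsum : Summable (fun k : ℕ => 1 / c * (((‖z0‖ + 1) ^ 2) ^ k / k.factorial)) :=
    (Real.summable_pow_div_factorial _).mul_left _
  refine tendsto_tsum_of_dominated_convergence (f := fun z k => bterm α k z) hsum ?_ ?_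
  · intro k
    have : Continuous (bterm α k) := by unfold bterm; fun_prop
    exact this.tendsto z0
  · filter_upwards [Metric.ball_mem_nhds z0 one_pos] with z hz k
    have hz' : ‖z‖ ≤ ‖z0‖ + 1 := by
      have : ‖z - z0‖ < 1 := by simpa [dist_eq_norm] using hz
      linarith [norm_le_norm_add_norm_sub' z z0]
    have hck := hcb k
    have hg : 0 < Real.Gamma (α + k + 1) := hc.trans_le hck
    rw [bterm_eq, norm_mul, Complex.norm_real, Real.norm_of_nonneg (by positivity), norm_pow,
      norm_neg, norm_div, norm_pow]
    have h4 : ‖(4 : ℂ)‖ = 4 := by simp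
    rw [h4]
    have h5 : ‖z‖ ^ 2 / 4 ≤ (‖z0‖ + 1) ^ 2 := by
      have : ‖z‖ ^ 2 ≤ (‖z0‖ + 1) ^ 2 := by gcongr
      nlinarith [sq_nonneg ‖z‖]
    calc _ ≤ 1 / (k.factorial * c) * ((‖z0‖ + 1) ^ 2) ^ k := by gcongr
      _ = _ := by field_simp

lemma w_bound (z : ℂ) (n : ℕ) (hn : 1 ≤ n) (B : ℝ) (hz : ‖z‖ ≤ B) :
    ‖z ^ 2 / (4 * (n : ℂ) ^ 2)‖ ≤ B ^ 2 / ((n : ℝ) + 1) ^ 2 := by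
  have hn' : (1 : ℝ) ≤ n := by exact_mod_cast hn
  rw [norm_div, norm_mul, norm_pow, norm_pow, Complex.norm_natCast]
  have h4 : ‖(4 : ℂ)‖ = 4 := by simp
  rw [h4]
  have : ((n : ℝ) + 1) ^ 2 ≤ 4 * (n : ℝ) ^ 2 := by nlinarith
  gcongr

lemma jterm_limit (α β : ℝ) (k : ℕ) (z0 : ℂ) :
    Tendsto (fun p : ℕ × ℂ => jterm α β p.1 k (p.2 ^ 2 / (4 * (p.1 : ℂ) ^ 2)) /
      (((p.1 : ℝ) ^ α : ℝ) : ℂ)) (atTop ×ˢ nhds z0) (nhds (bterm α k z0)) := by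
  have h1 : Tendsto (fun p : ℕ × ℂ => ((cc α β p.1 k / ((p.1 : ℝ) ^ α * ((p.1 : ℝ) ^ 2) ^ k) : ℝ) : ℂ))
      (atTop ×ˢ nhds z0) (nhds ((1 / (k.factorial * Real.Gamma (α + k + 1)) : ℝ) : ℂ)) :=
    (Complex.continuous_ofReal.tendsto _).comp ((cc_limit α β k).comp tendsto_fst)
  have h2 : Tendsto (fun p : ℕ × ℂ => (-(p.2 ^ 2 / 4)) ^ k) (atTop ×ˢ nhds z0)
      (nhds ((-(z0 ^ 2 / 4)) ^ k)) := by
    have : Continuous (fun z : ℂ => (-(z ^ 2 / 4)) ^ k) := by fun_prop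
    exact (this.tendsto z0).comp tendsto_snd
  have h3 : Tendsto (fun p : ℕ × ℂ => (1 - p.2 ^ 2 / (4 * (p.1 : ℂ) ^ 2)) ^ (p.1 - k))
      (atTop ×ˢ nhds z0) (nhds 1) := by
    rw [tendsto_iff_norm_sub_tendsto_zero]
    have h4 : Tendsto (fun p : ℕ × ℂ => Real.exp ((‖z0‖ + 1) ^ 2 / ((p.1 : ℝ) + 1)) - 1)
        (atTop ×ˢ nhds z0) (nhds 0) := by
      have h5 : Tendsto (fun n : ℕ => (‖z0‖ + 1) ^ 2 / ((n : ℝ) + 1)) atTop (nhds 0) := by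
        have := (tendsto_one_div_add_atTop_nhds_zero_nat (𝕜 := ℝ)).const_mul ((‖z0‖ + 1) ^ 2)
        simpa [div_eq_mul_inv] using this
      have h6 := ((Real.continuous_exp.tendsto 0).comp h5).sub_const 1
      simp only [Real.exp_zero, sub_self] at h6
      exact h6.comp tendsto_fst
    refine squeeze_zero' (Eventually.of_forall fun _ => norm_nonneg _) ?_ h4
    have e1 : ∀ᶠ p : ℕ × ℂ in atTop ×ˢ nhds z0, 1 ≤ p.1 := tendsto_fst.eventually (eventually_ge_atTop 1)
    have e2 : ∀ᶠ p : ℕ × ℂ in atTop ×ˢ nhds z0, p.2 ∈ Metric.ball z0 1 :=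
      tendsto_snd.eventually (Metric.ball_mem_nhds z0 one_pos)
    filter_upwards [e1, e2] with p hp1 hp2
    have hz' : ‖p.2‖ ≤ ‖z0‖ + 1 := by
      have : ‖p.2 - z0‖ < 1 := by simpa [dist_eq_norm] using hp2
      linarith [norm_le_norm_add_norm_sub' p.2 z0]
    have hw := w_bound p.2 p.1 hp1 _ hz'
    refine (norm_pow_sub_one _ _).trans ?_
    gcongr
    have h7 : ((p.1 - k : ℕ) : ℝ) ≤ (p.1 : ℝ) + 1 := by
      have : ((p.1 - k : ℕ) : ℝ) ≤ p.1 := by exact_mod_cast Nat.sub_le p.1 k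
      linarith
    calc _ ≤ ((p.1 : ℝ) + 1) * ((‖z0‖ + 1) ^ 2 / ((p.1 : ℝ) + 1) ^ 2) := by gcongr
      _ = _ := by field_simp
  have h := (h1.mul h2).mul h3
  rw [mul_one, ← bterm_eq] at h
  refine h.congr' ?_
  have e1 : ∀ᶠ p : ℕ × ℂ in atTop ×ˢ nhds z0, 1 ≤ p.1 := tendsto_fst.eventually (eventually_ge_atTop 1)
  filter_upwards [e1] with p hp1
  have hn : (p.1 : ℂ) ≠ 0 := by exact_mod_cast (by omega : p.1 ≠ 0)
  have hn' : (0 : ℝ) < p.1 := by exact_mod_cast hp1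
  have ha : (((p.1 : ℝ) ^ α : ℝ) : ℂ) ≠ 0 := by exact_mod_cast (Real.rpow_pos_of_pos hn' α).ne'
  have e : (-(p.2 ^ 2 / (4 * (p.1 : ℂ) ^ 2))) ^ k = (-(p.2 ^ 2 / 4)) ^ k / ((p.1 : ℂ) ^ 2) ^ k := by
    rw [← div_pow]; congr 1; field_simp
  rw [jterm, e]
  push_cast
  field_simp

lemma jacobi_mehlerHeine (α β : ℝ) (hα : -1 < α) (hβ : -1 < β) (z0 : ℂ) :
    Tendsto (fun p : ℕ × ℂ => Polynomial.aeval (1 - p.2 ^ 2 / (2 * (p.1 : ℂ) ^ 2)) (jacobiP α β p.1) /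
      (((p.1 : ℝ) ^ α : ℝ) : ℂ)) (atTop ×ˢ nhds z0) (nhds (besselG α z0)) := by
  obtain ⟨A, hA, hAb⟩ := jterm_bound α β hα hβ ((‖z0‖ + 1) ^ 2) (by positivity)
  have hsum : Summable (fun k : ℕ => 2 * A * (((1 + |β|) * (‖z0‖ + 1) ^ 2) ^ k / k.factorial)) :=
    (Real.summable_pow_div_factorial _).mul_left _
  have hr : ∀ᶠ n : ℕ in atTop, ((n : ℝ) + 1) ^ α / (n : ℝ) ^ α ≤ 2 := by
    have h1 : Tendsto (fun n : ℕ => (n : ℝ) / (n + 1)) atTop (nhds 1) :=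
      tendsto_natCast_div_add_atTop 1
    have h2 : Tendsto (fun n : ℕ => ((n : ℝ) / (n + 1)) ^ (-α)) atTop (nhds 1) := by
      simpa using h1.rpow_const (p := -α) (Or.inl one_ne_zero)
    filter_upwards [h2.eventually_le_const (by norm_num : (1 : ℝ) < 2)] with n hn
    rw [Real.rpow_neg (by positivity), Real.div_rpow (by positivity) (by positivity), inv_div] at hn
    exact hn
  have e1 : ∀ᶠ p : ℕ × ℂ in atTop ×ˢ nhds z0, 1 ≤ p.1 := tendsto_fst.eventually (eventually_ge_atTop 1)
  have e2 : ∀ᶠ p : ℕ × ℂ in atTop ×ˢ nhds z0, p.2 ∈ Metric.ball z0 1 :=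
    tendsto_snd.eventually (Metric.ball_mem_nhds z0 one_pos)
  have e3 : ∀ᶠ p : ℕ × ℂ in atTop ×ˢ nhds z0, ((p.1 : ℝ) + 1) ^ α / (p.1 : ℝ) ^ α ≤ 2 :=
    tendsto_fst.eventually hr
  have key := tendsto_tsum_of_dominated_convergence (𝓕 := atTop ×ˢ nhds z0)
    (f := fun (p : ℕ × ℂ) k => if k ∈ Finset.range (p.1 + 1) then
      jterm α β p.1 k (p.2 ^ 2 / (4 * (p.1 : ℂ) ^ 2)) / (((p.1 : ℝ) ^ α : ℝ) : ℂ) else 0)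
    (g := fun k => bterm α k z0) hsum ?_ ?_
  · refine key.congr' ?_
    filter_upwards [e1] with p hp1
    rw [show (1 : ℂ) - p.2 ^ 2 / (2 * (p.1 : ℂ) ^ 2) = 1 - 2 * (p.2 ^ 2 / (4 * (p.1 : ℂ) ^ 2)) by
      ring, aeval_jacobi, Finset.sum_div]
    rw [tsum_eq_sum (s := Finset.range (p.1 + 1))]
    · exact Finset.sum_congr rfl fun k hk => if_pos hk
    · intro k hk
      exact if_neg hk
  · intro k
    refine (jterm_limit α β k z0).congr' ?_
    have e4 : ∀ᶠ p : ℕ × ℂ in atTop ×ˢ nhds z0, k ≤ p.1 :=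
      tendsto_fst.eventually (eventually_ge_atTop k)
    filter_upwards [e4] with p hp
    rw [if_pos (Finset.mem_range.2 (by omega))]
  · filter_upwards [e1, e2, e3] with p hp1 hp2 hp3 k
    have hz' : ‖p.2‖ ≤ ‖z0‖ + 1 := by
      have : ‖p.2 - z0‖ < 1 := by simpa [dist_eq_norm] using hp2
      linarith [norm_le_norm_add_norm_sub' p.2 z0]
    have hw := w_bound p.2 p.1 hp1 _ hz'
    have hn' : (0 : ℝ) < p.1 := by exact_mod_cast hp1
    have hrp := Real.rpow_pos_of_pos hn' α
    split_ifs with hk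
    · rw [norm_div, Complex.norm_real, Real.norm_of_nonneg hrp.le]
      have hb := hAb p.1 k (by have := Finset.mem_range.1 hk; omega) _ hw
      calc _ ≤ A * ((p.1 : ℝ) + 1) ^ α * (((1 + |β|) * (‖z0‖ + 1) ^ 2) ^ k / k.factorial) /
            (p.1 : ℝ) ^ α := by gcongr
        _ = (((p.1 : ℝ) + 1) ^ α / (p.1 : ℝ) ^ α) *
            (A * (((1 + |β|) * (‖z0‖ + 1) ^ 2) ^ k / k.factorial)) := by ring
        _ ≤ 2 * (A * (((1 + |β|) * (‖z0‖ + 1) ^ 2) ^ k / k.factorial)) := by gcongr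
        _ = _ := by ring
    · rw [norm_zero]; positivity

lemma beta_ii (a b : ℝ) (ha : -1 < a) (hb : -1 < b) :
    IntervalIntegrable (fun t : ℝ => t ^ a * (1 - t) ^ b) MeasureTheory.volume 0 1 ∧
    ∫ t in (0 : ℝ)..1, t ^ a * (1 - t) ^ b =
      Real.Gamma (a + 1) * Real.Gamma (b + 1) / Real.Gamma (a + b + 2) := by
  have hua : (0 : ℝ) < ((a + 1 : ℝ) : ℂ).re := by simp; linarith
  have hvb : (0 : ℝ) < ((b + 1 : ℝ) : ℂ).re := by simp; linarith
  have hcg : ∀ t : ℝ, t ∈ Set.Icc (0 : ℝ) 1 →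
      (t : ℂ) ^ (((a + 1 : ℝ) : ℂ) - 1) * (1 - (t : ℂ)) ^ (((b + 1 : ℝ) : ℂ) - 1) =
      ((t ^ a * (1 - t) ^ b : ℝ) : ℂ) := by
    intro t ht
    rw [Complex.ofReal_mul, Complex.ofReal_cpow ht.1, Complex.ofReal_cpow (by linarith [ht.2])]
    push_cast
    ring_nf
  constructor
  · have h := Complex.betaIntegral_convergent hua hvb
    rw [intervalIntegrable_iff_integrableOn_Ioc_of_le zero_le_one] at h ⊢
    have h2 := h.re
    refine MeasureTheory.IntegrableOn.congr_fun h2 ?_ measurableSet_Ioc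
    intro t ht
    have := hcg t ⟨ht.1.le, ht.2⟩
    simp only [this]
    simp
  · have h := Complex.betaIntegral_eq_Gamma_mul_div _ _ hua hvb
    unfold Complex.betaIntegral at h
    rw [intervalIntegral.integral_congr (g := fun t : ℝ => ((t ^ a * (1 - t) ^ b : ℝ) : ℂ))
      (fun t ht => hcg t (by rwa [Set.uIcc_of_le zero_le_one] at ht)),
      intervalIntegral.integral_ofReal, ← Complex.ofReal_add, Complex.Gamma_ofReal,
      Complex.Gamma_ofReal, Complex.Gamma_ofReal] at h
    rw [show a + b + 2 = a + 1 + (b + 1) by ring]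
    exact_mod_cast h

lemma beta_ii_nat (a b : ℝ) (ha : -1 < a) (hb : -1 < b) (m l : ℕ) :
    IntervalIntegrable (fun t : ℝ => t ^ m * (1 - t) ^ l * (t ^ a * (1 - t) ^ b))
      MeasureTheory.volume 0 1 ∧
    ∫ t in (0 : ℝ)..1, t ^ m * (1 - t) ^ l * (t ^ a * (1 - t) ^ b) =
      Real.Gamma (m + a + 1) * Real.Gamma (l + b + 1) / Real.Gamma (m + l + a + b + 2) := by
  have hm : (0 : ℝ) ≤ m := by positivity
  have hl : (0 : ℝ) ≤ l := by positivity
  have h := beta_ii (m + a) (l + b) (by linarith) (by linarith)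
  have hcg : ∀ t ∈ Set.Ioo (0 : ℝ) 1, t ^ ((m : ℝ) + a) * (1 - t) ^ ((l : ℝ) + b) =
      t ^ m * (1 - t) ^ l * (t ^ a * (1 - t) ^ b) := by
    intro t ht
    rw [Real.rpow_add ht.1, Real.rpow_add (by linarith [ht.2]), Real.rpow_natCast, Real.rpow_natCast]
    ring
  constructor
  · have h2 := h.1
    rw [intervalIntegrable_iff_integrableOn_Ioo_of_le zero_le_one] at h2 ⊢
    exact MeasureTheory.IntegrableOn.congr_fun h2 hcg measurableSet_Ioo
  · rw [show (m : ℝ) + l + a + b + 2 = m + a + (l + b) + 2 by ring, ← h.2]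
    exact (intervalIntegral.integral_congr_Ioo_of_le zero_le_one hcg).symm

/-- The Jacobi polynomial in the variable `t = (1-x)/2`. -/
noncomputable def qq (α β : ℝ) (n : ℕ) : Polynomial ℝ :=
  ∑ k ∈ Finset.range (n + 1), Polynomial.C (cc α β n k * (-1) ^ k) *
    (Polynomial.X ^ k * (1 - Polynomial.X) ^ (n - k))

lemma qq_eval (α β : ℝ) (n : ℕ) (t : ℝ) : (jacobiP α β n).eval (1 - 2 * t) = (qq α β n).eval t := by
  rw [jacobiP_eq, qq, Polynomial.eval_finsetSum, Polynomial.eval_finsetSum]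
  refine Finset.sum_congr rfl fun k _ => ?_
  simp only [Polynomial.eval_mul, Polynomial.eval_pow, Polynomial.eval_C, Polynomial.eval_sub,
    Polynomial.eval_add, Polynomial.eval_X, Polynomial.eval_one]
  rw [show (2⁻¹ : ℝ) * (1 - 2 * t - 1) = -1 * t by ring, mul_pow,
    show (2⁻¹ : ℝ) * (1 - 2 * t + 1) = 1 - t by ring]
  ring

lemma normSq_eq (α β : ℝ) (n : ℕ) : jacobiNormSq α β n =
    2 ^ (α + β + 1) * ∫ t in (0 : ℝ)..1, (qq α β n).eval t * (qq α β n).eval t *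
      (t ^ α * (1 - t) ^ β) := by
  have h := intervalIntegral.integral_comp_sub_mul (a := 0) (b := 1) (c := (2 : ℝ))
    (fun x : ℝ => (jacobiP α β n).eval x ^ 2 * (1 - x) ^ α * (1 + x) ^ β) two_ne_zero 1
  rw [show (1 : ℝ) - 2 * 1 = -1 by norm_num, show (1 : ℝ) - 2 * 0 = 1 by norm_num] at h
  have h2 : jacobiNormSq α β n = 2 * ∫ t in (0 : ℝ)..1,
      (jacobiP α β n).eval (1 - 2 * t) ^ 2 * (1 - (1 - 2 * t)) ^ α * (1 + (1 - 2 * t)) ^ β := by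
    rw [h, smul_eq_mul, jacobiNormSq]; ring
  rw [h2, Real.rpow_add two_pos, Real.rpow_add two_pos, Real.rpow_one,
    ← intervalIntegral.integral_const_mul, ← intervalIntegral.integral_const_mul]
  refine intervalIntegral.integral_congr fun t ht => ?_
  rw [Set.uIcc_of_le zero_le_one] at ht
  rw [qq_eval, show 1 - (1 - 2 * t) = 2 * t by ring, show 1 + (1 - 2 * t) = 2 * (1 - t) by ring,
    Real.mul_rpow two_pos.le ht.1, Real.mul_rpow two_pos.le (by linarith [ht.2])]
  ring

lemma gamma_asc (x : ℝ) (hx : 0 < x) (m : ℕ) :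
    Real.Gamma (x + m) = (ascPochhammer ℝ m).eval x * Real.Gamma x := by
  induction m with
  | zero => simp
  | succ m ih =>
    rw [ascPochhammer_succ_eval, Nat.cast_succ, ← add_assoc, Real.Gamma_add_one (by positivity), ih]
    ring

lemma gamma_desc (x : ℝ) (m : ℕ) (hx : 0 < x - m + 1) :
    Real.Gamma (x + 1) = (descPochhammer ℝ m).eval x * Real.Gamma (x - m + 1) := by
  induction m with
  | zero => simp
  | succ m ih =>
    push_cast at hx ⊢
    rw [descPochhammer_succ_eval, ih (by linarith),
      show x - m + 1 = (x - (m + 1) + 1) + 1 by ring, Real.Gamma_add_one hx.ne']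
    ring

lemma alt_sum (α : ℝ) (n m : ℕ) (hm : m ≤ n) :
    ∑ k ∈ Finset.range (n + 1), (-1 : ℝ) ^ k / (k.factorial * (n - k).factorial) *
      (ascPochhammer ℝ m).eval (α + k + 1) = if m = n then (-1) ^ n else 0 := by
  set P : Polynomial ℝ := (ascPochhammer ℝ m).comp (Polynomial.X + Polynomial.C (α + 1)) with hP
  have hdeg : P.natDegree = m := by
    rw [hP, Polynomial.natDegree_comp, ascPochhammer_natDegree, Polynomial.natDegree_X_add_C, mul_one]
  have hmon : P.leadingCoeff = 1 := by
    have := (monic_ascPochhammer ℝ m).comp_X_add_C (α + 1)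
    exact this
  have h1 := fwdDiff_iter_eq_sum_shift (1 : ℝ) P.eval n 0
  have h2 : ∑ k ∈ Finset.range (n + 1), (-1 : ℝ) ^ k / (k.factorial * (n - k).factorial) *
      (ascPochhammer ℝ m).eval (α + k + 1) = (-1) ^ n / n.factorial * (fwdDiff (1 : ℝ))^[n] P.eval 0 := by
    rw [h1, Finset.mul_sum]
    refine Finset.sum_congr rfl fun k hk => ?_
    have hk' : k ≤ n := by have := Finset.mem_range.1 hk; omega
    have e1 : P.eval (0 + k • (1 : ℝ)) = (ascPochhammer ℝ m).eval (α + k + 1) := by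
      rw [hP, Polynomial.eval_comp]
      congr 1
      simp
      ring
    rw [e1, zsmul_eq_mul]
    push_cast
    rw [Nat.cast_choose ℝ hk']
    have e2 : (-1 : ℝ) ^ n * (-1) ^ (n - k) = (-1) ^ k := by
      obtain ⟨d, rfl⟩ := Nat.exists_eq_add_of_le hk'
      rw [Nat.add_sub_cancel_left, pow_add, mul_assoc, ← mul_pow]
      norm_num
    rw [← e2]
    have : (n.factorial : ℝ) ≠ 0 := by positivity
    have : (k.factorial : ℝ) ≠ 0 := by positivity
    have : ((n - k).factorial : ℝ) ≠ 0 := by positivity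
    field_simp
  rw [h2]
  split_ifs with h
  · subst h
    have h3 := Polynomial.fwdDiff_iter_degree_eq_factorial P
    rw [hdeg, hmon] at h3
    rw [h3]
    have : (m.factorial : ℝ) ≠ 0 := by positivity
    simp
    field_simp
  · rw [Polynomial.fwdDiff_iter_eq_zero_of_degree_lt (by rw [hdeg]; omega)]
    simp

lemma qq_moment (α β : ℝ) (hα : -1 < α) (hβ : -1 < β) (n m : ℕ) (hm : m ≤ n) :
    IntervalIntegrable (fun t : ℝ => (qq α β n).eval t * t ^ m * (t ^ α * (1 - t) ^ β))
      MeasureTheory.volume 0 1 ∧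
    ∫ t in (0 : ℝ)..1, (qq α β n).eval t * t ^ m * (t ^ α * (1 - t) ^ β) =
      if m = n then (-1) ^ n * (Real.Gamma (n + α + 1) * Real.Gamma (n + β + 1) /
        Real.Gamma (2 * n + α + β + 2)) else 0 := by
  have e : (fun t : ℝ => (qq α β n).eval t * t ^ m * (t ^ α * (1 - t) ^ β)) =
      fun t => ∑ k ∈ Finset.range (n + 1), (cc α β n k * (-1) ^ k) *
        (t ^ (m + k) * (1 - t) ^ (n - k) * (t ^ α * (1 - t) ^ β)) := by
    funext t
    rw [qq, Polynomial.eval_finsetSum, Finset.sum_mul, Finset.sum_mul]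
    refine Finset.sum_congr rfl fun k _ => ?_
    simp only [Polynomial.eval_mul, Polynomial.eval_pow, Polynomial.eval_C, Polynomial.eval_sub,
      Polynomial.eval_X, Polynomial.eval_one]
    ring
  have hIntg : ∀ k ∈ Finset.range (n + 1), IntervalIntegrable (fun t : ℝ => (cc α β n k * (-1) ^ k) *
        (t ^ (m + k) * (1 - t) ^ (n - k) * (t ^ α * (1 - t) ^ β))) MeasureTheory.volume 0 1 :=
    fun k _ => (beta_ii_nat α β hα hβ (m + k) (n - k)).1.const_mul _
  constructor
  · rw [e]
    have := IntervalIntegrable.sum (Finset.range (n + 1)) hIntg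
    have e2 : (fun t : ℝ => ∑ k ∈ Finset.range (n + 1), (cc α β n k * (-1) ^ k) *
        (t ^ (m + k) * (1 - t) ^ (n - k) * (t ^ α * (1 - t) ^ β))) =
      ∑ k ∈ Finset.range (n + 1), fun t : ℝ => (cc α β n k * (-1) ^ k) *
        (t ^ (m + k) * (1 - t) ^ (n - k) * (t ^ α * (1 - t) ^ β)) := by
      funext t
      rw [Finset.sum_apply]
    rw [e2]
    exact this
  rw [e, intervalIntegral.integral_finsetSum hIntg]
  have h2 : ∀ k ∈ Finset.range (n + 1), ∫ t in (0 : ℝ)..1, (cc α β n k * (-1) ^ k) *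
        (t ^ (m + k) * (1 - t) ^ (n - k) * (t ^ α * (1 - t) ^ β)) =
      (Real.Gamma (n + α + 1) * Real.Gamma (n + β + 1) / Real.Gamma (n + m + α + β + 2)) *
      ((-1 : ℝ) ^ k / (k.factorial * (n - k).factorial) * (ascPochhammer ℝ m).eval (α + k + 1)) := by
    intro k hk
    have hk' : k ≤ n := by have := Finset.mem_range.1 hk; omega
    have hkr : (k : ℝ) ≤ n := by exact_mod_cast hk'
    have hk0 : (0 : ℝ) ≤ k := by positivity
    rw [intervalIntegral.integral_const_mul, (beta_ii_nat α β hα hβ (m + k) (n - k)).2]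
    have h3 := gamma_asc (α + k + 1) (by linarith) m
    have hG1 := (Real.Gamma_pos_of_pos (by linarith : 0 < α + k + 1)).ne'
    have hG2 := (Real.Gamma_pos_of_pos (by linarith : 0 < (n : ℝ) - k + β + 1)).ne'
    rw [Nat.cast_sub hk', Nat.cast_add, show (m : ℝ) + k + α + 1 = α + k + 1 + m by ring, h3,
      show (m : ℝ) + k + (n - k) + α + β + 2 = n + m + α + β + 2 by ring, cc,
      Real.Gamma_nat_eq_factorial, show (n : ℝ) - k + 1 = ((n - k : ℕ) : ℝ) + 1 by
        rw [Nat.cast_sub hk'], Real.Gamma_nat_eq_factorial]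
    have : (k.factorial : ℝ) ≠ 0 := by positivity
    have : ((n - k).factorial : ℝ) ≠ 0 := by positivity
    field_simp
  rw [Finset.sum_congr rfl h2, ← Finset.mul_sum, alt_sum α n m hm]
  split_ifs with h
  · subst h
    rw [two_mul]; ring
  · simp

lemma qq_natDegree (α β : ℝ) (n : ℕ) : (qq α β n).natDegree ≤ n := by
  unfold qq
  refine Polynomial.natDegree_sum_le_of_forall_le _ _ fun k hk => ?_
  have hk' : k ≤ n := by have := Finset.mem_range.1 hk; omega
  have h1 : ((1 : Polynomial ℝ) - Polynomial.X).natDegree ≤ 1 := by compute_degree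
  have h2 : (((1 : Polynomial ℝ) - Polynomial.X) ^ (n - k)).natDegree ≤ n - k :=
    (Polynomial.natDegree_pow_le_of_le (n - k) h1).trans (by omega)
  refine (Polynomial.natDegree_C_mul_le _ _).trans ?_
  refine Polynomial.natDegree_mul_le.trans ?_
  rw [Polynomial.natDegree_X_pow]
  omega

lemma qq_coeff (α β : ℝ) (n : ℕ) :
    (qq α β n).coeff n = (-1) ^ n * ∑ k ∈ Finset.range (n + 1), cc α β n k := by
  unfold qq
  rw [Polynomial.finsetSum_coeff, Finset.mul_sum]
  refine Finset.sum_congr rfl fun k hk => ?_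
  have hk' : k ≤ n := by have := Finset.mem_range.1 hk; omega
  have h1 : ((1 : Polynomial ℝ) - Polynomial.X).natDegree ≤ 1 := by compute_degree
  have h2 : (((1 : Polynomial ℝ) - Polynomial.X) ^ (n - k)).coeff (n - k) = (-1) ^ (n - k) := by
    have := Polynomial.coeff_pow_of_natDegree_le (m := n - k) h1
    rw [mul_one] at this
    rw [this]
    congr 1
    rw [Polynomial.coeff_sub, Polynomial.coeff_X_one, Polynomial.coeff_one]
    norm_num
  rw [Polynomial.coeff_C_mul, Polynomial.coeff_X_pow_mul', if_pos hk', h2]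
  have : (-1 : ℝ) ^ n = (-1) ^ k * (-1) ^ (n - k) := by rw [← pow_add]; congr 1; omega
  rw [this]
  ring

lemma normSq_eq2 (α β : ℝ) (hα : -1 < α) (hβ : -1 < β) (n : ℕ) : jacobiNormSq α β n =
    2 ^ (α + β + 1) * ((∑ k ∈ Finset.range (n + 1), cc α β n k) *
      (Real.Gamma (n + α + 1) * Real.Gamma (n + β + 1) / Real.Gamma (2 * n + α + β + 2))) := by
  rw [normSq_eq]
  congr 1
  have e : (fun t : ℝ => (qq α β n).eval t * (qq α β n).eval t * (t ^ α * (1 - t) ^ β)) =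
      fun t => ∑ m ∈ Finset.range (n + 1), (qq α β n).coeff m *
        ((qq α β n).eval t * t ^ m * (t ^ α * (1 - t) ^ β)) := by
    funext t
    nth_rewrite 2 [Polynomial.eval_eq_sum_range' (Nat.lt_succ_of_le (qq_natDegree α β n))]
    rw [Finset.mul_sum, Finset.sum_mul]
    exact Finset.sum_congr rfl fun m _ => by ring
  have hm : ∀ m ∈ Finset.range (n + 1), m ≤ n := fun m hm => by
    have := Finset.mem_range.1 hm; omega
  rw [e, intervalIntegral.integral_finsetSum
    fun m h => ((qq_moment α β hα hβ n m (hm m h)).1).const_mul _]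
  rw [Finset.sum_congr rfl fun m h => by
    rw [intervalIntegral.integral_const_mul, (qq_moment α β hα hβ n m (hm m h)).2]]
  rw [Finset.sum_eq_single n]
  · rw [if_pos rfl, qq_coeff]
    have : (-1 : ℝ) ^ n * (-1) ^ n = 1 := by rw [← mul_pow]; norm_num
    linear_combination ((∑ k ∈ Finset.range (n + 1), cc α β n k) *
      (Real.Gamma (n + α + 1) * Real.Gamma (n + β + 1) / Real.Gamma (2 * n + α + β + 2))) * this
  · intro m _ h
    rw [if_neg h, mul_zero]
  · intro h
    exact absurd (Finset.mem_range.2 (Nat.lt_succ_self n)) h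

lemma choose_real (x : ℝ) (k : ℕ) : Ring.choose x k = (descPochhammer ℝ k).eval x / k.factorial := by
  rw [Ring.choose_eq_smul, smul_eq_mul, div_eq_inv_mul]
  congr 1
  rw [← descPochhammer_map (Int.castRingHom ℝ), Polynomial.eval_map,
    ← Polynomial.eval₂_smulOneHom_eq_smeval]
  congr 1
  exact RingHom.ext_int _ _

lemma cc_sum (α β : ℝ) (hα : -1 < α) (hβ : -1 < β) (n : ℕ) (hn : 1 ≤ n) :
    ∑ k ∈ Finset.range (n + 1), cc α β n k =
      Real.Gamma (2 * n + α + β + 1) / (n.factorial * Real.Gamma (n + α + β + 1)) := by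
  have hn' : (1 : ℝ) ≤ n := by exact_mod_cast hn
  have h := Ring.add_choose_eq (r := (n : ℝ) + β) (s := n + α) n (Commute.all _ _)
  rw [Finset.Nat.sum_antidiagonal_eq_sum_range_succ
    (fun i j => Ring.choose ((n : ℝ) + β) i * Ring.choose ((n : ℝ) + α) j), choose_real] at h
  have h1 := gamma_desc ((n : ℝ) + β + (n + α)) n (by linarith)
  rw [show (n : ℝ) + β + (n + α) + 1 = 2 * n + α + β + 1 by ring,
    show (n : ℝ) + β + (n + α) - n + 1 = n + α + β + 1 by ring] at h1
  have hG := (Real.Gamma_pos_of_pos (by linarith : 0 < (n : ℝ) + α + β + 1)).ne'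
  rw [h1, mul_div_mul_right _ _ hG, h]
  refine Finset.sum_congr rfl fun k hk => ?_
  have hk' : k ≤ n := by have := Finset.mem_range.1 hk; omega
  have hkr : (k : ℝ) ≤ n := by exact_mod_cast hk'
  have hk0 : (0 : ℝ) ≤ k := by positivity
  have h2 := gamma_desc ((n : ℝ) + β) k (by linarith)
  have h3 := gamma_desc ((n : ℝ) + α) (n - k) (by rw [Nat.cast_sub hk']; linarith)
  rw [Nat.cast_sub hk', show (n : ℝ) + α - (n - k) + 1 = α + k + 1 by ring] at h3
  rw [show (n : ℝ) + β - k + 1 = n - k + β + 1 by ring] at h2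
  have hG1 := (Real.Gamma_pos_of_pos (by linarith : 0 < α + k + 1)).ne'
  have hG2 := (Real.Gamma_pos_of_pos (by linarith : 0 < (n : ℝ) - k + β + 1)).ne'
  rw [cc, h2, h3, choose_real, choose_real, Real.Gamma_nat_eq_factorial,
    show (n : ℝ) - k + 1 = ((n - k : ℕ) : ℝ) + 1 by rw [Nat.cast_sub hk'],
    Real.Gamma_nat_eq_factorial]
  have : (k.factorial : ℝ) ≠ 0 := by positivity
  have : ((n - k).factorial : ℝ) ≠ 0 := by positivity
  field_simp

lemma normSq_pos (α β : ℝ) (hα : -1 < α) (hβ : -1 < β) (n : ℕ) : 0 < jacobiNormSq α β n := by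
  have hn : (0 : ℝ) ≤ n := by positivity
  rw [normSq_eq2 α β hα hβ]
  have h1 := Real.Gamma_pos_of_pos (by linarith : 0 < (n : ℝ) + α + 1)
  have h2 := Real.Gamma_pos_of_pos (by linarith : 0 < (n : ℝ) + β + 1)
  have h3 := Real.Gamma_pos_of_pos (by linarith : 0 < 2 * (n : ℝ) + α + β + 2)
  have h4 : 0 < ∑ k ∈ Finset.range (n + 1), cc α β n k :=
    Finset.sum_pos (fun k hk => cc_pos α β hα hβ n k (by have := Finset.mem_range.1 hk; omega))
      ⟨0, by simp⟩
  positivity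

lemma normSq_limit (α β : ℝ) (hα : -1 < α) (hβ : -1 < β) :
    Tendsto (fun n : ℕ => (n : ℝ) * jacobiNormSq α β n) atTop (nhds (2 ^ (α + β + 1) * (1 / 2))) := by
  have h0 : Tendsto (fun n : ℕ => (n : ℝ) / (n + (α + β + 1) / 2)) atTop (nhds 1) :=
    tendsto_natCast_div_add_atTop _
  have h := ((h0.const_mul (1 / 2)).mul (((gr_tendsto α).mul (gr_tendsto β)).div
    (gr_tendsto (α + β)) one_ne_zero)).const_mul (2 ^ (α + β + 1))
  simp only [mul_one, div_one] at h
  refine h.congr' ?_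
  filter_upwards [eventually_ge_atTop 1] with n hn
  have hn1 : (1 : ℝ) ≤ n := by exact_mod_cast hn
  have hn' : (0 : ℝ) < n := by linarith
  have hf : (n.factorial : ℝ) ≠ 0 := by positivity
  have ha := (Real.rpow_pos_of_pos hn' α).ne'
  have hb := (Real.rpow_pos_of_pos hn' β).ne'
  rw [normSq_eq2 α β hα hβ, cc_sum α β hα hβ n hn]
  simp only [gr, Pi.div_apply]
  have hp : 0 < 2 * (n : ℝ) + α + β + 1 := by linarith
  have hG1 := (Real.Gamma_pos_of_pos hp).ne'
  have hG2 := (Real.Gamma_pos_of_pos (by linarith : 0 < (n : ℝ) + α + β + 1)).ne'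
  rw [show 2 * (n : ℝ) + α + β + 2 = (2 * n + α + β + 1) + 1 by ring, Real.Gamma_add_one hp.ne',
    Real.rpow_add hn', show (n : ℝ) + (α + β) + 1 = n + α + β + 1 by ring,
    show (n : ℝ) + (α + β + 1) / 2 = (2 * n + α + β + 1) / 2 by ring]
  field_simp

lemma normSq_inv_bound (α β : ℝ) (hα : -1 < α) (hβ : -1 < β) :
    ∃ C : ℝ, 0 < C ∧ ∀ n : ℕ, 1 / jacobiNormSq α β n ≤ C * ((n : ℝ) + 1) := by
  have h := (normSq_limit α β hα hβ).inv₀ (by positivity)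
  obtain ⟨C, hC⟩ := h.bddAbove_range
  refine ⟨max C (max (1 / jacobiNormSq α β 0) 1), by positivity, fun n => ?_⟩
  rcases Nat.eq_zero_or_pos n with rfl | hn
  · simp
  · have hn' : (0 : ℝ) < n := by exact_mod_cast hn
    have h1 : ((n : ℝ) * jacobiNormSq α β n)⁻¹ ≤ C := hC ⟨n, rfl⟩
    have hp := normSq_pos α β hα hβ n
    have h2 : 1 / jacobiNormSq α β n = ((n : ℝ) * jacobiNormSq α β n)⁻¹ * n := by field_simp
    rw [h2]
    gcongr
    · exact h1.trans (le_max_left _ _)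
    · linarith

lemma sum_rpow_bound (s : ℝ) (hs : -1 < s) :
    ∃ C : ℝ, 0 < C ∧ ∀ n : ℕ, ∑ i ∈ Finset.range n, ((i : ℝ) + 1) ^ s ≤ C * (n : ℝ) ^ (s + 1) := by
  have hs1 : 0 < s + 1 := by linarith
  rcases le_or_gt 0 s with h | h
  · refine ⟨1, one_pos, fun n => ?_⟩
    rcases Nat.eq_zero_or_pos n with rfl | hn
    · simp [Real.zero_rpow hs1.ne']
    have hn' : (0 : ℝ) < n := by exact_mod_cast hn
    calc _ ≤ ∑ i ∈ Finset.range n, (n : ℝ) ^ s := by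
          refine Finset.sum_le_sum fun i hi => ?_
          have : ((i : ℝ) + 1) ≤ n := by exact_mod_cast Finset.mem_range.1 hi
          gcongr
      _ = _ := by
        rw [Finset.sum_const, Finset.card_range, nsmul_eq_mul, Real.rpow_add hn', Real.rpow_one]
        ring
  · refine ⟨1 / (s + 1), by positivity, fun n => ?_⟩
    induction n with
    | zero => simp [Real.zero_rpow hs1.ne']
    | succ n ih =>
      rw [Finset.sum_range_succ]
      have hn : (0 : ℝ) < (n : ℝ) + 1 := by positivity
      have hb := rpow_one_add_le_one_add_mul_self (s := -1 / ((n : ℝ) + 1)) (p := s + 1)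
        (by rw [le_div_iff₀ hn]; linarith [(Nat.cast_nonneg n : (0:ℝ) ≤ n)]) hs1.le (by linarith)
      have e : 1 + -1 / ((n : ℝ) + 1) = n / (n + 1) := by field_simp; ring
      rw [e, Real.div_rpow (by positivity) hn.le, div_le_iff₀ (by positivity)] at hb
      have e2 : ((n : ℝ) + 1) ^ (s + 1) = ((n : ℝ) + 1) ^ s * (n + 1) := by
        rw [Real.rpow_add hn, Real.rpow_one]
      have e3 : (1 + (s + 1) * (-1 / ((n : ℝ) + 1))) * ((n : ℝ) + 1) ^ (s + 1) =
          ((n : ℝ) + 1) ^ (s + 1) - (s + 1) * ((n : ℝ) + 1) ^ s := by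
        rw [e2]; field_simp; ring
      rw [e3] at hb
      push_cast
      have h5 : ((n : ℝ) + 1) ^ s ≤ 1 / (s + 1) * (((n : ℝ) + 1) ^ (s + 1) - (n : ℝ) ^ (s + 1)) := by
        rw [one_div_mul_eq_div, le_div_iff₀ hs1]
        linarith
      calc _ ≤ 1 / (s + 1) * (n : ℝ) ^ (s + 1) +
            1 / (s + 1) * (((n : ℝ) + 1) ^ (s + 1) - (n : ℝ) ^ (s + 1)) := add_le_add ih h5
        _ = _ := by ring

lemma kern_bound (α β : ℝ) (hα : -1 < α) (hβ : -1 < β) (j : ℕ) (B : ℝ) :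
    ∃ C : ℝ, 0 < C ∧ ∀ n : ℕ, 1 ≤ n → ∀ z : ℂ, ‖z‖ ≤ B →
      ‖Polynomial.aeval (1 - z ^ 2 / (2 * (n : ℂ) ^ 2)) (kernKPoly α β j (n - 1))‖ ≤
        C * (n : ℝ) ^ (2 * α + 2 * j + 2) := by
  obtain ⟨A1, hA1, h1⟩ := deriv_bound α β hα hβ j
  obtain ⟨A2, hA2, h2⟩ := jacobi_bound α β hα hβ (B ^ 2) (by positivity)
  obtain ⟨A3, hA3, h3⟩ := normSq_inv_bound α β hα hβ
  have hj : (0 : ℝ) ≤ j := by positivity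
  obtain ⟨A4, hA4, h4⟩ := sum_rpow_bound (2 * α + 2 * j + 1) (by linarith)
  refine ⟨A1 * A3 * A2 * A4, by positivity, fun n hn z hz => ?_⟩
  have hw := w_bound z n hn B hz
  rw [show (1 : ℂ) - z ^ 2 / (2 * (n : ℂ) ^ 2) = 1 - 2 * (z ^ 2 / (4 * (n : ℂ) ^ 2)) by ring]
  unfold kernKPoly
  rw [Nat.sub_add_cancel hn, map_sum]
  calc _ ≤ ∑ i ∈ Finset.range n, A1 * A3 * A2 * ((i : ℝ) + 1) ^ (2 * α + 2 * j + 1) := by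
        refine (norm_sum_le _ _).trans (Finset.sum_le_sum fun i hi => ?_)
        have hin : (i : ℝ) + 1 ≤ n + 1 := by
          have : (i : ℝ) ≤ n := by exact_mod_cast (Finset.mem_range.1 hi).le
          linarith
        have hi0 : (0 : ℝ) < (i : ℝ) + 1 := by positivity
        have hp := normSq_pos α β hα hβ i
        have h5 := h2 i (z ^ 2 / (4 * (n : ℂ) ^ 2)) (hw.trans (by gcongr))
        rw [map_mul, Polynomial.aeval_C, norm_mul, Complex.coe_algebraMap, Complex.norm_real,
          Real.norm_eq_abs, abs_div, abs_of_pos hp, div_eq_mul_one_div]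
        have e : ((i : ℝ) + 1) ^ (2 * α + 2 * j + 1) =
            ((i : ℝ) + 1) ^ (α + 2 * j) * ((i : ℝ) + 1) * ((i : ℝ) + 1) ^ α := by
          rw [show 2 * α + 2 * (j : ℝ) + 1 = (α + 2 * j) + 1 + α by ring, Real.rpow_add hi0,
            Real.rpow_add hi0, Real.rpow_one]
        calc _ ≤ (A1 * ((i : ℝ) + 1) ^ (α + 2 * j)) * (A3 * ((i : ℝ) + 1)) *
              (A2 * ((i : ℝ) + 1) ^ α) := by
              have h6 := h1 i
              have h7 := h3 i
              gcongr
          _ = _ := by rw [e]; ring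
    _ = A1 * A3 * A2 * ∑ i ∈ Finset.range n, ((i : ℝ) + 1) ^ (2 * α + 2 * j + 1) := by
      rw [Finset.mul_sum]
    _ ≤ A1 * A3 * A2 * (A4 * (n : ℝ) ^ (2 * α + 2 * j + 1 + 1)) := by
      gcongr
      exact h4 n
    _ = _ := by
      rw [show 2 * α + 2 * (j : ℝ) + 1 + 1 = 2 * α + 2 * j + 2 by ring]; ring

lemma kernK_nonneg (α β : ℝ) (hα : -1 < α) (hβ : -1 < β) (j n : ℕ) : 0 ≤ kernK α β j j n 1 1 := by
  unfold kernK
  exact Finset.sum_nonneg fun i _ => div_nonneg (mul_self_nonneg _) (normSq_pos α β hα hβ i).le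

lemma corr_limit (α β : ℝ) (hα : -1 < α) (hβ : -1 < β) (j : ℕ)
    (γ M : ℝ) (Ms : ℕ → ℝ) (hMs : ∀ n, 0 ≤ Ms n)
    (hlim : Filter.Tendsto (fun n : ℕ => Ms n * (n : ℝ) ^ γ) Filter.atTop (nhds M))
    (hγ : 2 * (α + 2 * j + 1) < γ) (z0 : ℂ) :
    Tendsto (fun p : ℕ × ℂ => Polynomial.aeval (1 - p.2 ^ 2 / (2 * (p.1 : ℂ) ^ 2))
      (Polynomial.C (Ms p.1 * (Polynomial.derivative^[j] (jacobiP α β p.1)).eval 1 /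
        (1 + Ms p.1 * kernK α β j j (p.1 - 1) 1 1)) * kernKPoly α β j (p.1 - 1)) /
      (((p.1 : ℝ) ^ α : ℝ) : ℂ)) (atTop ×ˢ nhds z0) (nhds 0) := by
  obtain ⟨A1, hA1, h1⟩ := deriv_bound α β hα hβ j
  obtain ⟨A2, hA2, h2⟩ := kern_bound α β hα hβ j (‖z0‖ + 1)
  have hr : Tendsto (fun n : ℕ => ((n : ℝ) + 1) ^ (α + 2 * j) / (n : ℝ) ^ (α + 2 * j)) atTop
      (nhds 1) := by
    have h1 : Tendsto (fun n : ℕ => (n : ℝ) / (n + 1)) atTop (nhds 1) :=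
      tendsto_natCast_div_add_atTop 1
    have h2 : Tendsto (fun n : ℕ => ((n : ℝ) / (n + 1)) ^ (-(α + 2 * j))) atTop (nhds 1) := by
      simpa using h1.rpow_const (p := -(α + 2 * j)) (Or.inl one_ne_zero)
    refine h2.congr fun n => ?_
    rw [Real.rpow_neg (by positivity), Real.div_rpow (by positivity) (by positivity), inv_div]
  have hd : Tendsto (fun n : ℕ => (n : ℝ) ^ (-(γ - 2 * (α + 2 * j + 1)))) atTop (nhds 0) :=
    (tendsto_rpow_neg_atTop (by linarith)).comp tendsto_natCast_atTop_atTop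
  have hE := ((hlim.mul hr).mul hd).const_mul (A1 * A2)
  rw [mul_zero, mul_zero] at hE
  have hE2 := hE.comp (tendsto_fst (f := (atTop : Filter ℕ)) (g := nhds z0))
  have e1 : ∀ᶠ p : ℕ × ℂ in atTop ×ˢ nhds z0, 1 ≤ p.1 := tendsto_fst.eventually (eventually_ge_atTop 1)
  have e2 : ∀ᶠ p : ℕ × ℂ in atTop ×ˢ nhds z0, p.2 ∈ Metric.ball z0 1 :=
    tendsto_snd.eventually (Metric.ball_mem_nhds z0 one_pos)
  refine squeeze_zero_norm' ?_ hE2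
  filter_upwards [e1, e2] with p hp1 hp2
  have hz' : ‖p.2‖ ≤ ‖z0‖ + 1 := by
    have : ‖p.2 - z0‖ < 1 := by simpa [dist_eq_norm] using hp2
    linarith [norm_le_norm_add_norm_sub' p.2 z0]
  have hn' : (0 : ℝ) < p.1 := by exact_mod_cast hp1
  have hrp := Real.rpow_pos_of_pos hn' α
  have hm := hMs p.1
  have hk := kernK_nonneg α β hα hβ j (p.1 - 1)
  have h3 := h2 p.1 hp1 p.2 hz'
  have h4 : |Ms p.1 * (Polynomial.derivative^[j] (jacobiP α β p.1)).eval 1 /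
        (1 + Ms p.1 * kernK α β j j (p.1 - 1) 1 1)| ≤ Ms p.1 * (A1 * ((p.1 : ℝ) + 1) ^ (α + 2 * j)) := by
    have h5 : 1 ≤ 1 + Ms p.1 * kernK α β j j (p.1 - 1) 1 1 := by
      linarith [mul_nonneg hm hk]
    rw [abs_div, abs_of_nonneg (by linarith : 0 ≤ 1 + Ms p.1 * kernK α β j j (p.1 - 1) 1 1), abs_mul,
      abs_of_nonneg hm]
    refine (div_le_self (by positivity) h5).trans ?_
    have := h1 p.1
    gcongr
  rw [norm_div, Complex.norm_real, Real.norm_of_nonneg hrp.le, map_mul, Polynomial.aeval_C, norm_mul,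
    Complex.coe_algebraMap, Complex.norm_real, Real.norm_eq_abs]
  calc _ ≤ Ms p.1 * (A1 * ((p.1 : ℝ) + 1) ^ (α + 2 * j)) * (A2 * (p.1 : ℝ) ^ (2 * α + 2 * j + 2)) /
        (p.1 : ℝ) ^ α := by gcongr
    _ = _ := by
      simp only [Function.comp_apply]
      have e : (p.1 : ℝ) ^ (2 * α + 2 * j + 2) =
          (p.1 : ℝ) ^ γ * (p.1 : ℝ) ^ (-(γ - 2 * (α + 2 * j + 1))) * (p.1 : ℝ) ^ α /
            (p.1 : ℝ) ^ (α + 2 * j) := by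
        rw [← Real.rpow_add hn', ← Real.rpow_add hn', ← Real.rpow_sub hn']
        congr 1
        ring
      rw [e]
      have := (Real.rpow_pos_of_pos hn' (α + 2 * j)).ne'
      field_simp

/-- Mehler–Heine formula for `Q_n` when `γ > 2(α+2j+1)`. -/
theorem sobQ_mehlerHeine_large_gamma (α β : ℝ) (hα : -1 < α) (hβ : -1 < β) (j : ℕ)
    (γ M : ℝ) (hM : 0 < M) (Ms : ℕ → ℝ) (hMs : ∀ n, 0 ≤ Ms n)
    (hlim : Filter.Tendsto (fun n : ℕ => Ms n * (n : ℝ) ^ γ) Filter.atTop (nhds M))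
    (hγ : 2 * (α + 2 * j + 1) < γ) (K : Set ℂ) (hK : IsCompact K) :
    TendstoUniformlyOn
      (fun (n : ℕ) (z : ℂ) =>
        Polynomial.aeval (1 - z ^ 2 / (2 * (n : ℂ) ^ 2)) (sobQ α β j Ms n) /
          (((n : ℝ) ^ α : ℝ) : ℂ))
      (fun z => besselG α z) Filter.atTop K := by
  rw [← tendstoLocallyUniformlyOn_iff_tendstoUniformlyOn_of_compact hK,
    tendstoLocallyUniformlyOn_iff_forall_tendsto]
  intro z0 _
  have h1 := (jacobi_mehlerHeine α β hα hβ z0).sub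
    (corr_limit α β hα hβ j γ M Ms hMs hlim hγ z0)
  rw [sub_zero] at h1
  have h2 : Tendsto (fun p : ℕ × ℂ => besselG α p.2) (atTop ×ˢ nhds z0) (nhds (besselG α z0)) :=
    ((besselG_continuous α hα).tendsto z0).comp tendsto_snd
  have h3 : Tendsto (fun p : ℕ × ℂ => Polynomial.aeval (1 - p.2 ^ 2 / (2 * (p.1 : ℂ) ^ 2))
      (sobQ α β j Ms p.1) / (((p.1 : ℝ) ^ α : ℝ) : ℂ)) (atTop ×ˢ nhds z0)
      (nhds (besselG α z0)) := by
    refine h1.congr fun p => ?_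
    rw [sobQ, map_sub, sub_div]
  have h4 := (h2.prodMk_nhds h3).mono_right (nhds_le_uniformity (besselG α z0))
  exact h4.mono_left (Filter.prod_mono_right _ nhdsWithin_le_nhds)
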